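/- Let α ∈ (0,1] and C₁ ≥ 0, and let u be a classical solution of the extended drift–diffusion equation with drift b and right-hand side f such that sup_{[−1,0]×B_1^+} |u| ≤ 1, ‖u‖_{C^α([−1,0]×B_1^0)} ≤ C₁ and sup_{t∈[−1,0]} ‖u(t,·,·)‖_{C^α(closure(B_1^+))} ≤ C₁. Then for every ε > 0 there exists δ > 0, depending only on ε, α, C₁, s and n, such that if sup_{[−1,0]×B_1^0} |b| < δ and sup_{[−1,0]×B_1^0} |f| < δ, then every classical solution v of the localized fractional heat equation that agrees with u on ({−1} × closure(B_1^+)) ∪ ([−1,0] × closure((∂B_1)^+)) satisfies sup_{[−1,0]×B_1^+} |u − v| ≤ ε. -/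

import Mathlib

open Set Filter Topology MeasureTheory
open scoped RealInnerProductSpace

noncomputable section

abbrev En (n : ℕ) := EuclideanSpace ℝ (Fin n)

/-- The open upper half ball `B_r^+`. -/
def halfBall (n : ℕ) (r : ℝ) : Set (En n × ℝ) :=
  {p | ‖p.1‖ ^ 2 + p.2 ^ 2 < r ^ 2 ∧ 0 < p.2}

/-- The closure of the upper half ball. -/
def closedHalfBall (n : ℕ) (r : ℝ) : Set (En n × ℝ) :=
  {p | ‖p.1‖ ^ 2 + p.2 ^ 2 ≤ r ^ 2 ∧ 0 ≤ p.2}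

/-- `B_r^+ ∪ B_r^0`. -/
def halfBallWithBase (n : ℕ) (r : ℝ) : Set (En n × ℝ) :=
  {p | ‖p.1‖ ^ 2 + p.2 ^ 2 < r ^ 2 ∧ 0 ≤ p.2}

/-- The flat ball `B_r^0` in `ℝⁿ`. -/
def flatBall (n : ℕ) (r : ℝ) : Set (En n) := {x | ‖x‖ < r}

/-- `(∂B_1)^+`. -/
def spherePlus (n : ℕ) : Set (En n × ℝ) := {p | ‖p.1‖ ^ 2 + p.2 ^ 2 = 1 ∧ 0 < p.2}

/-- closure of `(∂B_1)^+`. -/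
def closedSpherePlus (n : ℕ) : Set (En n × ℝ) := {p | ‖p.1‖ ^ 2 + p.2 ^ 2 = 1 ∧ 0 ≤ p.2}

/-- Second directional derivative of `u` at `p` in direction `v`. -/
def D2 {n : ℕ} (u : En n × ℝ → ℝ) (p v : En n × ℝ) : ℝ :=
  fderiv ℝ (fun q => fderiv ℝ u q v) p v

/-- The Laplacian in the `n+1` variables `(x, y)`. -/
def lap {n : ℕ} (u : En n × ℝ → ℝ) (p : En n × ℝ) : ℝ :=
  (∑ i : Fin n, D2 u p (EuclideanSpace.single i 1, 0)) + D2 u p (0, 1)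

/-- `u` is `a`-harmonic on `Ω`: it is `C²` there and `Δu + (a/y) ∂_y u = 0`. -/
def IsAHarmonicOn {n : ℕ} (a : ℝ) (u : En n × ℝ → ℝ) (Ω : Set (En n × ℝ)) : Prop :=
  ContDiffOn ℝ 2 u Ω ∧ ∀ p ∈ Ω, lap u p + (a / p.2) * fderiv ℝ u p (0, 1) = 0

/-- `lim_{y → 0⁺} y^a ∂_y w(x, y) = L`. -/
def NormalDerivLimit {n : ℕ} (a : ℝ) (w : En n × ℝ → ℝ) (x : En n) (L : ℝ) : Prop :=
  Tendsto (fun y : ℝ => y ^ a * fderiv ℝ w (x, y) (0, 1)) (𝓝[>] (0 : ℝ)) (𝓝 L)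

/-- The boundary-restriction `(t, x) ↦ u(t, x, 0)`. -/
def bdryFun {n : ℕ} (u : ℝ → En n × ℝ → ℝ) : ℝ × En n → ℝ := fun q => u q.1 (q.2, 0)

/-- A classical solution of the extended drift–diffusion equation on
`[-1,0] × closure (B_1^+)` with drift `b` and right-hand side `f`. -/
def IsExtDDSolution {n : ℕ} (a : ℝ) (b : ℝ → En n → En n) (f : ℝ → En n → ℝ)
    (u : ℝ → En n × ℝ → ℝ) : Prop :=
  ContinuousOn (fun q : ℝ × (En n × ℝ) => u q.1 q.2) (Icc (-1 : ℝ) 0 ×ˢ closedHalfBall n 1) ∧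
  (∀ t ∈ Icc (-1 : ℝ) 0, IsAHarmonicOn a (u t) (halfBall n 1)) ∧
  (∀ q ∈ Ioc (-1 : ℝ) 0 ×ˢ flatBall n 1,
      DifferentiableWithinAt ℝ (bdryFun u) (Ioc (-1 : ℝ) 0 ×ˢ flatBall n 1) q) ∧
  (∀ t x, (t, x) ∈ Ioc (-1 : ℝ) 0 ×ˢ flatBall n 1 →
      ∃ L : ℝ, NormalDerivLimit a (u t) x L ∧
        fderivWithin ℝ (bdryFun u) (Ioc (-1 : ℝ) 0 ×ˢ flatBall n 1) (t, x) (1, 0) +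
          fderivWithin ℝ (bdryFun u) (Ioc (-1 : ℝ) 0 ×ˢ flatBall n 1) (t, x) (0, b t x) -
          L = f t x)

/-- A classical solution of the localized fractional heat equation on
`[-1,0] × closure (B_1^+)`. -/
def IsFracHeatSolution {n : ℕ} (a : ℝ) (u : ℝ → En n × ℝ → ℝ) : Prop :=
  ContinuousOn (fun q : ℝ × (En n × ℝ) => u q.1 q.2) (Icc (-1 : ℝ) 0 ×ˢ closedHalfBall n 1) ∧
  (∀ t ∈ Icc (-1 : ℝ) 0, IsAHarmonicOn a (u t) (halfBall n 1)) ∧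
  (∀ t ∈ Ioc (-1 : ℝ) 0, ∀ x ∈ flatBall n 1,
      DifferentiableWithinAt ℝ (fun τ => u τ (x, 0)) (Ioc (-1 : ℝ) 0) t ∧
      NormalDerivLimit a (u t) x (derivWithin (fun τ => u τ (x, 0)) (Ioc (-1 : ℝ) 0) t))


/-- One-variable two-jet at `0`. -/
def Jet (g : ℝ → ℝ) (d1 d2 : ℝ) : Prop :=
  ∃ g1 : ℝ → ℝ, (∀ᶠ s in 𝓝 (0:ℝ), HasDerivAt g (g1 s) s) ∧ g1 0 = d1 ∧ HasDerivAt g1 d2 0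

theorem Jet.add {g h : ℝ → ℝ} {a b c d : ℝ} (hg : Jet g a b) (hh : Jet h c d) :
    Jet (fun s => g s + h s) (a + c) (b + d) := by
  obtain ⟨g1, h1, h2, h3⟩ := hg
  obtain ⟨k1, l1, l2, l3⟩ := hh
  refine ⟨fun s => g1 s + k1 s, ?_, by simp [h2, l2], h3.add l3⟩
  filter_upwards [h1, l1] with s hs ks using hs.add ks

theorem Jet.sub {g h : ℝ → ℝ} {a b c d : ℝ} (hg : Jet g a b) (hh : Jet h c d) :
    Jet (fun s => g s - h s) (a - c) (b - d) := by
  obtain ⟨g1, h1, h2, h3⟩ := hg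
  obtain ⟨k1, l1, l2, l3⟩ := hh
  refine ⟨fun s => g1 s - k1 s, ?_, by simp [h2, l2], h3.sub l3⟩
  filter_upwards [h1, l1] with s hs ks using hs.sub ks

theorem Jet.cmul {g : ℝ → ℝ} {a b : ℝ} (c : ℝ) (hg : Jet g a b) :
    Jet (fun s => c * g s) (c * a) (c * b) := by
  obtain ⟨g1, h1, h2, h3⟩ := hg
  refine ⟨fun s => c * g1 s, ?_, by simp [h2], h3.const_mul c⟩
  filter_upwards [h1] with s hs using hs.const_mul c

theorem Jet.const (c : ℝ) : Jet (fun _ => c) 0 0 :=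
  ⟨fun _ => 0, Eventually.of_forall fun s => hasDerivAt_const s c, rfl, hasDerivAt_const 0 0⟩

theorem Jet.congr_vals {g : ℝ → ℝ} {a b a' b' : ℝ} (hg : Jet g a b) (h1 : a = a') (h2 : b = b') :
    Jet g a' b' := by subst h1 h2; exact hg

/-- quadratic -/
theorem Jet.quad (c d e : ℝ) : Jet (fun s => c + d * s + e * s ^ 2) d (2 * e) := by
  refine ⟨fun s => d + 2 * e * s, Eventually.of_forall fun s => ?_, by simp, ?_⟩
  · have h1 := ((hasDerivAt_id s).const_mul d)
    have h2 := ((hasDerivAt_pow 2 s).const_mul e)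
    have := ((hasDerivAt_const s c).add h1).add h2
    exact this.congr_deriv (by simp; ring)
  · have := ((hasDerivAt_id (0:ℝ)).const_mul (2*e)).const_add d
    simpa using this

/-- power of affine function -/
theorem Jet.rpow (c d r : ℝ) (hc : 0 < c) :
    Jet (fun s => (c + d * s) ^ r) (r * d * c ^ (r-1)) (r * (r-1) * d ^ 2 * c ^ (r-2)) := by
  have hl : ∀ s : ℝ, HasDerivAt (fun s => c + d * s) d s := fun s => by
    simpa using ((hasDerivAt_id s).const_mul d).const_add c
  have hev : ∀ᶠ s in 𝓝 (0:ℝ), 0 < c + d * s := by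
    have : ContinuousAt (fun s => c + d * s) 0 := (hl 0).continuousAt
    exact this.eventually (lt_mem_nhds (by simpa using hc))
  refine ⟨fun s => r * d * (c + d * s) ^ (r-1), ?_, by simp, ?_⟩
  · filter_upwards [hev] with s hs
    have := (hl s).rpow_const (p := r) (Or.inl hs.ne')
    convert this using 1; ring
  · have := ((hl 0).rpow_const (p := r - 1) (Or.inl (by simpa using hc.ne'))).const_mul (r * d)
    refine this.congr_deriv ?_
    simp only [mul_zero, add_zero]
    rw [show r - 1 - 1 = r - 2 by ring]; ring

theorem Jet.max {g : ℝ → ℝ} {a b : ℝ} (hg : Jet g a b) (hm : IsLocalMax g 0) : a = 0 ∧ b ≤ 0 := by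
  obtain ⟨g1, h1, h2, h3⟩ := hg
  have h10 := h1.self_of_nhds
  have ha : a = 0 := by rw [← h2]; exact hm.hasDerivAt_eq_zero h10
  refine ⟨ha, ?_⟩
  by_contra hb
  push Not at hb
  have hd : deriv g =ᶠ[𝓝 0] g1 := by filter_upwards [h1] with s hs using hs.deriv
  have hdd : deriv (deriv g) 0 = b := by rw [hd.deriv_eq]; exact h3.deriv
  have hmin := isLocalMin_of_deriv_deriv_pos (by rw [hdd]; exact hb)
    (by rw [hd.self_of_nhds, h2, ha]) h10.continuousAt
  have hc : g =ᶠ[𝓝 0] fun _ => g 0 := by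
    filter_upwards [hmin, hm] with s h h' using le_antisymm h' h
  have hc2 : deriv g =ᶠ[𝓝 0] fun _ => 0 := by
    have := hc.deriv
    refine this.trans ?_
    simp
  have : deriv (deriv g) 0 = 0 := by rw [hc2.deriv_eq]; simp
  linarith

theorem jet_line {n : ℕ} {u : En n × ℝ → ℝ} {Ω : Set (En n × ℝ)} (hΩ : IsOpen Ω)
    (hu : ContDiffOn ℝ 2 u Ω) {p : En n × ℝ} (hp : p ∈ Ω) (v : En n × ℝ) :
    Jet (fun s => u (p + s • v)) (fderiv ℝ u p v) (D2 u p v) := by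
  have hl : ∀ s : ℝ, HasDerivAt (fun s : ℝ => p + s • v) v s := fun s => by
    simpa using ((hasDerivAt_id s).smul_const v).const_add p
  have hev : ∀ᶠ s in 𝓝 (0:ℝ), p + s • v ∈ Ω :=
    (hl 0).continuousAt.eventually (hΩ.mem_nhds (by simpa using hp))
  refine ⟨fun s => fderiv ℝ u (p + s • v) v, ?_, by simp, ?_⟩
  · filter_upwards [hev] with s hs
    have hd : DifferentiableAt ℝ u (p + s • v) :=
      ((hu.contDiffAt (hΩ.mem_nhds hs)).differentiableAt (by norm_num))
    exact hd.hasFDerivAt.comp_hasDerivAt s (hl s)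
  · have h1 : ContDiffOn ℝ 1 (fderiv ℝ u) Ω := hu.fderiv_of_isOpen hΩ (by norm_num)
    have h2 : DifferentiableAt ℝ (fun q => fderiv ℝ u q v) p :=
      ((h1.contDiffAt (hΩ.mem_nhds hp)).differentiableAt (by norm_num)).clm_apply
        (differentiableAt_const v)
    have h3 : HasFDerivAt (fun q => fderiv ℝ u q v) (fderiv ℝ (fun q => fderiv ℝ u q v) p)
      (p + (0:ℝ) • v) := by simpa using h2.hasFDerivAt
    exact h3.comp_hasDerivAt 0 (hl 0)

theorem isOpen_halfBall (n : ℕ) (r : ℝ) : IsOpen (halfBall n r) := by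
  have h1 : IsOpen {p : En n × ℝ | ‖p.1‖ ^ 2 + p.2 ^ 2 < r ^ 2} :=
    isOpen_lt (by fun_prop) (by fun_prop)
  have h2 : IsOpen {p : En n × ℝ | 0 < p.2} := isOpen_lt (by fun_prop) (by fun_prop)
  exact h1.inter h2

theorem isCompact_closedHalfBall (n : ℕ) (r : ℝ) : IsCompact (closedHalfBall n r) := by
  apply Metric.isCompact_of_isClosed_isBounded
  · have h1 : IsClosed {p : En n × ℝ | ‖p.1‖ ^ 2 + p.2 ^ 2 ≤ r ^ 2} :=
      isClosed_le (by fun_prop) (by fun_prop)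
    have h2 : IsClosed {p : En n × ℝ | 0 ≤ p.2} := isClosed_le (by fun_prop) (by fun_prop)
    exact h1.inter h2
  · refine Metric.isBounded_closedBall (x := (0 : En n × ℝ)) (r := |r|) |>.subset ?_
    rintro ⟨x, y⟩ ⟨h1, h2⟩
    simp only at h1 h2
    simp only [Metric.mem_closedBall, dist_zero_right, Prod.norm_def, sup_le_iff]
    constructor
    · exact (abs_of_nonneg (norm_nonneg x)) ▸ sq_le_sq.1 (by nlinarith)
    · rw [Real.norm_eq_abs]; exact sq_le_sq.1 (by nlinarith [sq_nonneg ‖x‖])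

/-- interior maximum: lower bound on jets contradicts -/
theorem no_interior_max {n : ℕ} {W : En n × ℝ → ℝ} {p : En n × ℝ} (hm : IsLocalMax W p)
    {a : ℝ} {c : Fin n → ℝ} {c' : Fin n → ℝ} {d1 d2 : ℝ}
    (hi : ∀ i, Jet (fun s => W (p + s • (EuclideanSpace.single i (1:ℝ), (0:ℝ)))) (c' i) (c i))
    (hy : Jet (fun s => W (p + s • ((0 : En n), (1:ℝ)))) d1 d2) :
    (∑ i, c i) + d2 + a / p.2 * d1 ≤ 0 := by
  have key : ∀ v : En n × ℝ, IsLocalMax (fun s : ℝ => W (p + s • v)) 0 := fun v => by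
    have hc : ContinuousAt (fun s : ℝ => p + s • v) 0 := by fun_prop
    have : ∀ᶠ q in 𝓝 (p + (0:ℝ) • v), W q ≤ W p := by
      rw [zero_smul, add_zero]; exact hm
    have := hc.eventually this
    filter_upwards [this] with s hs
    simpa using hs
  have h1 : ∑ i, c i ≤ 0 := Finset.sum_nonpos fun i _ => ((hi i).max (key _)).2
  obtain ⟨h2, h3⟩ := hy.max (key _)
  rw [h2]; linarith

theorem one_sided {g : ℝ → ℝ} {κ d : ℝ} (hκ : 0 < κ) (hg : HasDerivWithinAt g d (Icc 0 κ) 0)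
    (hm : ∀ s ∈ Icc 0 κ, g s ≤ g 0) : d ≤ 0 := by
  have h := hg.mono (Ioc_subset_Icc_self (a := 0) (b := κ))
  rw [hasDerivWithinAt_iff_tendsto_slope] at h
  have hne : (𝓝[Ioc 0 κ \ {0}] (0:ℝ)).NeBot := by
    have : Ioc 0 κ \ {0} = Ioc 0 κ := by
      ext x; simp only [Set.mem_sdiff, mem_Ioc, mem_singleton_iff]; grind
    rw [this, nhdsWithin_Ioc_eq_nhdsGT hκ]; infer_instance
  refine le_of_tendsto h ?_
  filter_upwards [self_mem_nhdsWithin] with s hs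
  rw [slope_def_field]
  exact div_nonpos_of_nonpos_of_nonneg (by linarith [hm s ⟨hs.1.1.le, hs.1.2⟩]) (by linarith [hs.1.1])

theorem base_max {g g' : ℝ → ℝ} {a κ L : ℝ} (hκ : 0 < κ) (hc : ContinuousOn g (Icc 0 κ))
    (hd : ∀ y ∈ Ioo 0 κ, HasDerivAt g (g' y) y)
    (hL : Tendsto (fun y => y ^ a * g' y) (𝓝[>] 0) (𝓝 L)) (hm : ∀ y ∈ Icc 0 κ, g y ≤ g 0) :
    L ≤ 0 := by
  by_contra hlt
  push Not at hlt
  have h1 := hL.eventually (lt_mem_nhds hlt)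
  obtain ⟨r, hr, h2⟩ := (mem_nhdsGT_iff_exists_Ioo_subset).1 h1
  have hr : 0 < r := hr
  have hmin : 0 < min r κ := lt_min hr hκ
  have hmono : StrictMonoOn g (Icc 0 (min r κ)) := by
    apply strictMonoOn_of_deriv_pos (convex_Icc _ _)
      (hc.mono (Icc_subset_Icc_right (min_le_right _ _)))
    intro y hy
    rw [interior_Icc] at hy
    rw [(hd y ⟨hy.1, hy.2.trans_le (min_le_right _ _)⟩).deriv]
    have : 0 < y ^ a * g' y := h2 ⟨hy.1, hy.2.trans_le (min_le_left _ _)⟩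
    exact pos_of_mul_pos_right this (Real.rpow_nonneg hy.1.le _)
  have := hmono (left_mem_Icc.2 hmin.le) (right_mem_Icc.2 hmin.le) hmin
  linarith [hm (min r κ) ⟨hmin.le, min_le_right _ _⟩]

theorem modulus {α C ε : ℝ} (hα : 0 < α) (hε : 0 < ε) :
    ∃ r > 0, r ≤ 1 ∧ ∀ x, 0 ≤ x → x ≤ r → C * x ^ α ≤ ε := by
  have hc : ContinuousAt (fun x : ℝ => C * x ^ α) 0 :=
    continuousAt_const.mul (Real.continuousAt_rpow_const _ _ (Or.inr hα.le))
  have h : ∀ᶠ x in 𝓝 (0:ℝ), C * x ^ α < ε :=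
    hc.eventually (gt_mem_nhds (by simpa [Real.zero_rpow hα.ne'] using hε))
  obtain ⟨r, hr, h2⟩ := Metric.eventually_nhds_iff.1 h
  refine ⟨min (r/2) 1, by positivity, min_le_right _ _, fun x h0 hx => (h2 ?_).le⟩
  rw [Real.dist_eq, sub_zero, abs_of_nonneg h0]
  linarith [hx.trans (min_le_left _ _)]

theorem y_deriv {n : ℕ} {a : ℝ} {u : En n × ℝ → ℝ} (hu : IsAHarmonicOn a u (halfBall n 1))
    {x : En n} {y : ℝ} (h : (x, y) ∈ halfBall n 1) :
    HasDerivAt (fun y => u (x, y)) (fderiv ℝ u (x, y) (0, 1)) y := by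
  have hd : DifferentiableAt ℝ u (x, y) :=
    (hu.1.contDiffAt ((isOpen_halfBall n 1).mem_nhds h)).differentiableAt (by norm_num)
  have hl : HasDerivAt (fun y : ℝ => (x, y)) ((0 : En n), (1:ℝ)) y :=
    (hasDerivAt_const y x).prodMk (hasDerivAt_id y)
  exact hd.hasFDerivAt.comp_hasDerivAt y hl

theorem y_cont {n : ℕ} {u : ℝ → En n × ℝ → ℝ}
    (hu : ContinuousOn (fun q : ℝ × (En n × ℝ) => u q.1 q.2) (Icc (-1 : ℝ) 0 ×ˢ closedHalfBall n 1))
    {t : ℝ} (ht : t ∈ Icc (-1:ℝ) 0) {x : En n} {κ : ℝ}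
    (hκ : ‖x‖ ^ 2 + κ ^ 2 ≤ 1) : ContinuousOn (fun y => u t (x, y)) (Icc 0 κ) := by
  have hc : Continuous (fun y : ℝ => (t, (x, y))) := by fun_prop
  refine hu.comp hc.continuousOn ?_
  intro y hy
  refine ⟨ht, ?_, hy.1⟩
  have := hy.1; have := hy.2
  simp only; nlinarith

theorem exists_kappa {n : ℕ} {x : En n} {r : ℝ} (h : ‖x‖ ^ 2 < r) :
    ∃ κ > 0, ‖x‖ ^ 2 + κ ^ 2 < r := by
  refine ⟨√((r - ‖x‖^2)/2), by apply Real.sqrt_pos.2; linarith, ?_⟩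
  rw [Real.sq_sqrt (by linarith)]; linarith

theorem time_deriv {h : ℝ → ℝ} {t : ℝ} (ht : t ∈ Ioc (-1:ℝ) 0)
    (hd : DifferentiableWithinAt ℝ h (Ioc (-1:ℝ) 0) t) :
    HasDerivWithinAt (fun s => h (t - s)) (-(derivWithin h (Ioc (-1:ℝ) 0) t)) (Icc 0 ((t+1)/2)) 0 := by
  have h1 : HasDerivWithinAt (fun s : ℝ => t - s) (-1) (Icc 0 ((t+1)/2)) 0 :=
    ((hasDerivAt_id (0:ℝ)).const_sub t).hasDerivWithinAt
  have h2 : HasDerivWithinAt h (derivWithin h (Ioc (-1:ℝ) 0) t) (Ioc (-1:ℝ) 0) (t - 0) := by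
    simpa using hd.hasDerivWithinAt
  have hm : MapsTo (fun s : ℝ => t - s) (Icc 0 ((t+1)/2)) (Ioc (-1:ℝ) 0) := by
    intro s hs
    have := hs.1; have := hs.2; have := ht.1; have := ht.2
    constructor <;> simp only <;> linarith
  have := h2.scomp (0:ℝ) h1 hm
  simpa [Function.comp_def] using this

/-- Hypotheses on `u`. -/
def HypU (n : ℕ) (α C₁ : ℝ) (u : ℝ → En n × ℝ → ℝ) : Prop :=
  (∀ t ∈ Icc (-1 : ℝ) 0, ∀ t' ∈ Icc (-1 : ℝ) 0,
        ∀ x ∈ flatBall n 1, ∀ x' ∈ flatBall n 1,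
          |u t (x, 0) - u t' (x', 0)| ≤ C₁ * (|t - t'| + ‖x - x'‖) ^ α) ∧
  (∀ t ∈ Icc (-1 : ℝ) 0, ∀ p ∈ closedHalfBall n 1, |u t p| ≤ C₁) ∧
  (∀ t ∈ Icc (-1 : ℝ) 0, ∀ p ∈ closedHalfBall n 1, ∀ q ∈ closedHalfBall n 1,
          |u t p - u t q| ≤ C₁ * ‖p - q‖ ^ α)

/-- Agreement on the parabolic boundary. -/
def Agree (n : ℕ) (u v : ℝ → En n × ℝ → ℝ) : Prop :=
  (∀ p ∈ closedHalfBall n 1, v (-1) p = u (-1) p) ∧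
  (∀ t ∈ Icc (-1 : ℝ) 0, ∀ p ∈ closedSpherePlus n, v t p = u t p)

theorem q_bound {n : ℕ} {e : En n} (he : ‖e‖ = 1) {X : En n × ℝ} (hX : X ∈ closedHalfBall n 1) :
    ‖X.1 - e‖ ^ 2 + X.2 ^ 2 ≤ 2 - 2 * inner ℝ e X.1 ∧ 2 - 2 * inner ℝ e X.1 ≤ 4 := by
  have h1 := @norm_sub_sq_real _ _ _ X.1 e
  have h2 := hX.1
  have h3 : |inner ℝ e X.1| ≤ ‖e‖ * ‖X.1‖ := abs_real_inner_le_norm e X.1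
  rw [real_inner_comm] at h1
  rw [he] at h1 h3
  constructor
  · linarith
  · have := (abs_le.1 h3).1
    have : ‖X.1‖ ≤ 1 := by nlinarith [sq_nonneg X.2]
    linarith

theorem q_pow {n : ℕ} {e : En n} (he : ‖e‖ = 1) {X : En n × ℝ} (hX : X ∈ closedHalfBall n 1)
    {s : ℝ} (hs : 0 < s) : ‖X - (e, 0)‖ ^ (2*s) ≤ (2 - 2 * inner ℝ e X.1) ^ s ∧
    X.2 ^ (2 * s) ≤ (2 - 2 * inner ℝ e X.1) ^ s := by
  have h := (q_bound he hX).1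
  have hn : ‖X - (e, 0)‖ ^ 2 ≤ 2 - 2 * inner ℝ e X.1 := by
    rw [Prod.norm_def]
    rcases max_cases ‖(X - (e,0)).1‖ ‖(X - (e,0)).2‖ with ⟨h1, _⟩ | ⟨h1, _⟩ <;> rw [h1]
    · simp only [Prod.fst_sub]; nlinarith [sq_nonneg X.2]
    · simp only [Prod.snd_sub, sub_zero, Real.norm_eq_abs, sq_abs]; nlinarith [sq_nonneg ‖X.1 - e‖]
  constructor
  · rw [Real.rpow_mul (norm_nonneg _), Real.rpow_two]
    exact Real.rpow_le_rpow (sq_nonneg _) hn hs.le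
  · rw [Real.rpow_mul hX.2, Real.rpow_two]
    exact Real.rpow_le_rpow (sq_nonneg _) (by nlinarith [sq_nonneg ‖X.1 - e‖]) hs.le

theorem harm_sum {n : ℕ} {a : ℝ} {u : En n × ℝ → ℝ} {Ω} (hu : IsAHarmonicOn a u Ω) {p}
    (hp : p ∈ Ω) : (∑ i : Fin n, D2 u p (EuclideanSpace.single i 1, 0)) + D2 u p (0, 1)
      + (a / p.2) * fderiv ℝ u p (0, 1) = 0 := hu.2 p hp

theorem flat_halfball {n : ℕ} {p : En n × ℝ} (hp : p ∈ halfBall n 1) : p ∈ closedHalfBall n 1 :=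
  ⟨hp.1.le, hp.2.le⟩

theorem corner_claim {n : ℕ} {s α C₁ ε r M K : ℝ} (hs : s ∈ Ioo (0 : ℝ) (1/2))
    (hr : 0 < r) (hr1 : r ≤ 1) (hε : 0 < ε)
    (hmod : ∀ x, 0 ≤ x → x ≤ r → C₁ * x ^ α ≤ ε) (hM0 : 0 ≤ M) (hM : 2 * C₁ ≤ M * r)
    (hK0 : 0 < K) (hK : 2 * C₁ ≤ K * r ^ (2*s)) (hKM : M < 2 * s * K)
    {u v : ℝ → En n × ℝ → ℝ} (hu : HypU n α C₁ u) (hv : IsFracHeatSolution (1 - 2*s) v)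
    (huv : Agree n u v) {e : En n} (he : ‖e‖ = 1) {t : ℝ} (ht : t ∈ Icc (-1:ℝ) 0)
    {X : En n × ℝ} (hX : X ∈ closedHalfBall n 1) :
    v t X ≤ u t (e, 0) + 4 * ε + K * (2 * (2 - 2 * inner ℝ e X.1) ^ s - X.2 ^ (2*s)) := by
  have hs0 := hs.1
  have hs2 := hs.2
  obtain ⟨hu1, hu2, hu3⟩ := hu
  obtain ⟨hv1, hv2, hv3⟩ := hv
  have hP : ((e, 0) : En n × ℝ) ∈ closedHalfBall n 1 := ⟨by simp [he], le_refl _⟩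
  set ψ : En n × ℝ → ℝ := fun X => 2 * (2 - 2 * inner ℝ e X.1) ^ s - X.2 ^ (2*s) with hψ
  have hψc : Continuous ψ := by
    apply Continuous.sub
    · apply Continuous.mul continuous_const
      apply Continuous.rpow_const (by fun_prop)
      intro x; right; exact hs0.le
    · apply Continuous.rpow_const (by fun_prop)
      intro x; right; linarith
  have hψq : ∀ X ∈ closedHalfBall n 1, ‖X - (e, 0)‖ ^ (2*s) ≤ ψ X := by
    intro X hX
    have := q_pow he hX hs0
    simp only [hψ]; linarith
  -- space modulus
  have hsp : ∀ t ∈ Icc (-1:ℝ) 0, ∀ X ∈ closedHalfBall n 1, u t X ≤ u t (e, 0) + ε + K * ψ X := by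
    intro t ht X hX
    have h0 : 0 ≤ ‖X - (e, 0)‖ ^ (2*s) := Real.rpow_nonneg (norm_nonneg _) _
    have h1 := hψq X hX
    rcases le_total ‖X - (e,0)‖ r with h | h
    · have := (abs_le.1 (hu3 t ht X hX _ hP)).2
      have h2 := hmod _ (norm_nonneg _) h
      have : 0 ≤ K * ψ X := mul_nonneg hK0.le (h0.trans h1)
      linarith
    · have h2 : r ^ (2*s) ≤ ψ X := (Real.rpow_le_rpow hr.le h (by linarith)).trans h1
      have := mul_le_mul_of_nonneg_left h2 hK0.le
      have := (abs_le.1 (hu2 t ht X hX)).2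
      have := (abs_le.1 (hu2 t ht _ hP)).1
      linarith
  -- time modulus
  have htm : ∀ t' ∈ Icc (-1:ℝ) t, u t' (e, 0) ≤ u t (e, 0) + 3 * ε + M * (t - t') := by
    intro t' ht'
    have ht'' : t' ∈ Icc (-1:ℝ) 0 := ⟨ht'.1, ht'.2.trans ht.2⟩
    have hn0 : 0 ≤ M * (t - t') := mul_nonneg hM0 (by linarith [ht'.2])
    rcases le_total (t - t') r with h | h
    · have hn : ‖(1 - r) • e‖ = 1 - r := by
        rw [norm_smul, he, mul_one, Real.norm_eq_abs, abs_of_nonneg (by linarith)]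
      have hf : (1 - r) • e ∈ flatBall n 1 := by
        show ‖(1 - r) • e‖ < 1
        rw [hn]; linarith
      have hQ : (((1 - r) • e, 0) : En n × ℝ) ∈ closedHalfBall n 1 :=
        ⟨by simp only [hn]; nlinarith, le_refl _⟩
      have hd : ‖(((1 - r) • e, 0) : En n × ℝ) - (e, 0)‖ = r := by
        have : (((1 - r) • e, 0) : En n × ℝ) - (e, 0) = (-(r • e), 0) := by
          ext1
          · simp only [Prod.fst_sub]; module
          · simp
        rw [this, Prod.norm_def]
        simp [norm_smul, he, abs_of_pos hr, hr.le]
      have a1 := abs_le.1 (hu3 t ht _ hQ _ hP)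
      have a2 := abs_le.1 (hu3 t' ht'' _ hQ _ hP)
      rw [hd] at a1 a2
      have a3 := abs_le.1 (hu1 t' ht'' t ht _ hf _ hf)
      have h1 := hmod r hr.le le_rfl
      have h2 := hmod (t - t') (by linarith [ht'.2]) h
      rw [sub_self, norm_zero, add_zero, abs_sub_comm, abs_of_nonneg (by linarith [ht'.2])] at a3
      linarith [a1.1, a1.2, a2.1, a2.2, a3.1, a3.2]
    · have := mul_le_mul_of_nonneg_left h hM0
      have := (abs_le.1 (hu2 t' ht'' _ hP)).2
      have := (abs_le.1 (hu2 t ht _ hP)).1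
      linarith
  -- maximum
  by_contra hlt
  push Not at hlt
  set Φ : ℝ × (En n × ℝ) → ℝ := fun q => v q.1 q.2 - K * ψ q.2 + M * q.1 with hΦ
  have hcomp : IsCompact (Icc (-1:ℝ) t ×ˢ closedHalfBall n 1) :=
    isCompact_Icc.prod (isCompact_closedHalfBall n 1)
  have hΦc : ContinuousOn Φ (Icc (-1:ℝ) t ×ˢ closedHalfBall n 1) := by
    apply ContinuousOn.add
    · apply ContinuousOn.sub
      · exact hv1.mono (prod_mono (Icc_subset_Icc_right ht.2) subset_rfl)
      · exact (by fun_prop : Continuous fun q : ℝ × (En n × ℝ) => K * ψ q.2).continuousOn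
    · fun_prop
  obtain ⟨⟨t1, X1⟩, ⟨ht1, hX1⟩, hmax⟩ := hcomp.exists_isMaxOn
    ⟨(t, X), ⟨ht.1, le_rfl⟩, hX⟩ hΦc
  simp only at ht1 hX1
  have hmax' : ∀ t' ∈ Icc (-1:ℝ) t, ∀ Y ∈ closedHalfBall n 1,
      v t' Y - K * ψ Y + M * t' ≤ v t1 X1 - K * ψ X1 + M * t1 := fun t' h Y h' =>
    hmax (show (t', Y) ∈ _ from ⟨h, h'⟩)
  have hbig : u t (e, 0) + 4 * ε + M * t < v t1 X1 - K * ψ X1 + M * t1 := by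
    have := hmax' t ⟨ht.1, le_rfl⟩ X hX
    simp only [hψ] at this hlt ⊢
    linarith
  have ht1' : t1 ∈ Icc (-1:ℝ) 0 := ⟨ht1.1, ht1.2.trans ht.2⟩
  have hne : v t1 X1 ≠ u t1 X1 := by
    intro h
    have h1 := hsp t1 ht1' X1 hX1
    have h2 := htm t1 ht1
    linarith
  have ht1lt : -1 < t1 := by
    rcases ht1.1.lt_or_eq with h | h
    · exact h
    · exact absurd (by rw [← h]; exact huv.1 X1 hX1) hne
  have hX1lt : ‖X1.1‖ ^ 2 + X1.2 ^ 2 < 1 := by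
    have : ‖X1.1‖ ^ 2 + X1.2 ^ 2 ≤ 1 := by simpa using hX1.1
    rcases this.lt_or_eq with h | h
    · exact h
    · exact absurd (huv.2 t1 ht1' X1 ⟨h, hX1.2⟩) hne
  rcases hX1.2.lt_or_eq with hy | hy
  · -- interior
    have hin : X1 ∈ halfBall n 1 := ⟨by simpa using hX1lt, hy⟩
    have hop := isOpen_halfBall n 1
    set q := 2 - 2 * inner ℝ e X1.1 with hq
    have hq0 : 0 < q := by
      have := (q_bound he hX1).1
      have : 0 < X1.2 ^ 2 := by positivity
      nlinarith [sq_nonneg ‖X1.1 - e‖]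
    have hloc : IsLocalMax (fun Y => v t1 Y - K * ψ Y) X1 := by
      filter_upwards [hop.mem_nhds hin] with Y hY
      have := hmax' t1 ht1 Y (flat_halfball hY)
      linarith
    have j1 := fun w => jet_line hop (hv2 t1 ht1').1 hin w
    have ji : ∀ i : Fin n, Jet (fun σ => ψ (X1 + σ • (EuclideanSpace.single i (1:ℝ), (0:ℝ))))
        (2 * (s * (-2 * e i) * q ^ (s-1)) - 0)
        (2 * (s * (s-1) * (-2 * e i) ^ 2 * q ^ (s-2)) - 0) := by
      intro i
      have := ((Jet.rpow q (-2 * e i) s hq0).cmul 2).sub (Jet.const (X1.2 ^ (2*s)))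
      convert this using 2 with σ
      simp only [hψ, hq, Prod.fst_add, Prod.smul_fst, Prod.snd_add, Prod.smul_snd, inner_add_right,
        inner_smul_right, EuclideanSpace.inner_single_right]
      simp
      ring_nf
    have jy : Jet (fun σ => ψ (X1 + σ • ((0 : En n), (1:ℝ))))
        (0 - (2*s) * 1 * X1.2 ^ (2*s-1)) (0 - (2*s) * (2*s-1) * 1 ^ 2 * X1.2 ^ (2*s-2)) := by
      have := (Jet.const (2 * q ^ s)).sub (Jet.rpow X1.2 1 (2*s) hy)
      convert this using 2 with σ
      simp [hψ, hq]
    have := no_interior_max (a := 1 - 2*s) hloc (fun i => (j1 _).sub ((ji i).cmul K))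
      ((j1 _).sub (jy.cmul K))
    have hh := harm_sum (hv2 t1 ht1') hin
    have hsum : ∑ i : Fin n, e i ^ 2 = 1 := by
      rw [← EuclideanSpace.real_norm_sq_eq, he]; norm_num
    have hsum2 : ∑ i : Fin n, K * (2 * (s * (s-1) * (-2 * e i) ^ 2 * q ^ (s-2)) - 0)
        = K * (8 * s * (s - 1) * q ^ (s-2)) := by
      rw [← mul_one (K * _), ← hsum, Finset.mul_sum]
      apply Finset.sum_congr rfl; intros; ring
    rw [Finset.sum_sub_distrib, hsum2] at this
    have hyy : (1 - 2*s) / X1.2 * X1.2 ^ (2*s-1) = (1 - 2*s) * X1.2 ^ (2*s-2) := by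
      rw [show 2*s - 2 = (2*s-1) - 1 by ring, Real.rpow_sub_one hy.ne' (2*s-1)]; ring
    have hqp : 0 < q ^ (s-2) := Real.rpow_pos_of_pos hq0 _
    have hneg : K * (8 * s * (s - 1) * q ^ (s-2)) < 0 := by
      have : 0 < K * (8 * s * (1 - s) * q ^ (s-2)) := by
        have : 0 < 1 - s := by linarith
        positivity
      linarith
    have e1 : (1 - 2*s) / X1.2 * (fderiv ℝ (v t1) X1 (0,1) - K * (0 - (2*s) * 1 * X1.2 ^ (2*s-1)))
       = (1 - 2*s) / X1.2 * fderiv ℝ (v t1) X1 (0,1) +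
        2 * s * K * ((1 - 2*s) * X1.2 ^ (2*s-2)) := by
      rw [← hyy]; ring
    rw [e1] at this
    linarith
  · -- base
    obtain ⟨x1, y1⟩ := X1
    simp only at hy hX1lt
    subst hy
    have hxf : ‖x1‖ ^ 2 < 1 := by simpa using hX1lt
    have hxflat : x1 ∈ flatBall n 1 := by
      show ‖x1‖ < 1
      nlinarith [norm_nonneg x1]
    have htio : t1 ∈ Ioc (-1:ℝ) 0 := ⟨ht1lt, ht1'.2⟩
    obtain ⟨hdt, hL⟩ := hv3 t1 htio x1 hxflat
    set D := derivWithin (fun τ => v τ (x1, 0)) (Ioc (-1 : ℝ) 0) t1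
    -- time
    have hT : -D - M ≤ 0 := by
      have h1 := (time_deriv htio hdt).sub
        ((hasDerivAt_id (0:ℝ)).const_mul M).hasDerivWithinAt
      rw [mul_one] at h1
      refine one_sided (κ := (t1+1)/2) (by linarith) h1 ?_
      intro σ hσ
      have h2 := hmax' (t1 - σ) ⟨by linarith [hσ.2], by linarith [hσ.1, ht1.2]⟩ (x1, 0) hX1
      simp only [Pi.sub_apply, id, sub_zero, mul_zero]
      linarith
    -- space
    obtain ⟨κ, hκ, hκ1⟩ := exists_kappa hxf
    have hball : ∀ y ∈ Ioo 0 κ, (x1, y) ∈ halfBall n 1 := fun y hy =>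
      ⟨by simp only; nlinarith [hy.1, hy.2], hy.1⟩
    have hS : D + 2 * s * K ≤ 0 := by
      refine base_max (g := fun y => v t1 (x1, y) + K * y ^ (2*s))
        (g' := fun y => fderiv ℝ (v t1) (x1, y) (0,1) + K * (2 * s * y ^ (2*s-1))) (a := 1 - 2*s)
        hκ ?_ ?_ ?_ ?_
      · apply (y_cont hv1 ht1' hκ1.le).add
        apply Continuous.continuousOn
        apply Continuous.mul continuous_const
        apply Continuous.rpow_const (by fun_prop)
        intro x; right; linarith
      · intro y hy
        exact (y_deriv (hv2 t1 ht1') (hball y hy)).add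
          ((Real.hasDerivAt_rpow_const (Or.inl hy.1.ne')).const_mul K)
      · refine Tendsto.congr' ?_ (Tendsto.add_const (2*s*K) hL)
        filter_upwards [self_mem_nhdsWithin] with y hy
        have hy : 0 < y := hy
        have : y ^ (1 - 2*s) * y ^ (2*s-1) = 1 := by
          rw [← Real.rpow_add hy]; simp
        linear_combination (-2 * s * K) * this
      · intro y hy
        have h2 := hmax' t1 ht1 (x1, y) ⟨by simp only; nlinarith [hy.1, hy.2], hy.1⟩
        simp only [hψ] at h2
        rw [Real.zero_rpow (by positivity)] at h2 ⊢
        linarith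
    linarith

theorem near_corner {n : ℕ} (hn : 1 ≤ n) {s α C₁ ε : ℝ} (hs : s ∈ Ioo (0 : ℝ) (1/2))
    (hα : 0 < α) (hC₁ : 0 ≤ C₁) (hε : 0 < ε) :
    ∃ ρ > 0, ρ ≤ 1/2 ∧ ∃ A > 0, ∀ u v : ℝ → En n × ℝ → ℝ, HypU n α C₁ u →
      IsFracHeatSolution (1 - 2*s) v → Agree n u v → ∀ t ∈ Icc (-1:ℝ) 0,
      ∀ X ∈ closedHalfBall n 1, (1 - ρ ≤ ‖X.1‖ → v t X ≤ u t X + ε) ∧ v t X ≤ u t X + A := by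
  have hs0 := hs.1
  have hs2 := hs.2
  set ε0 := ε / 16 with hε0
  have hε0p : 0 < ε0 := by positivity
  obtain ⟨r, hr, hr1, hmod⟩ := modulus (C := C₁) hα hε0p
  set M := 2 * C₁ / r with hM
  have hM0 : 0 ≤ M := by positivity
  set K := 2 * C₁ / r ^ (2*s) + (M + 1) / (2 * s) with hK
  have hrp : 0 < r ^ (2*s) := Real.rpow_pos_of_pos hr _
  have hK0 : 0 < K := by positivity
  have hMr : 2 * C₁ ≤ M * r := by rw [hM]; field_simp; exact le_rfl
  have hK1 : 2 * C₁ ≤ K * r ^ (2*s) := by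
    have : 0 ≤ (M + 1) / (2 * s) * r ^ (2*s) := by positivity
    rw [hK, add_mul, div_mul_cancel₀ _ hrp.ne']; linarith
  have hK2 : M < 2 * s * K := by
    have : 0 ≤ 2 * s * (2 * C₁ / r ^ (2*s)) := by positivity
    rw [hK, mul_add, mul_div_cancel₀ _ (by positivity)]; linarith
  obtain ⟨r2, hr2, hr21, hmod2⟩ := modulus (C := 2 * K) hs0 hε0p
  refine ⟨min r2 (r^2) / 2, by positivity, by linarith [min_le_left r2 (r^2)],
    2 * C₁ + 4 * ε0 + 8 * K, by positivity, ?_⟩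
  intro u v hu hv huv t ht X hX
  have claim : ∀ e : En n, ‖e‖ = 1 → _ := fun e he =>
    corner_claim hs hr hr1 hε0p hmod hM0 hMr hK0 hK1 hK2 hu hv huv (e := e) he ht hX
  have hyp : 0 ≤ X.2 ^ (2*s) := Real.rpow_nonneg hX.2 _
  have hKy := mul_nonneg hK0.le hyp
  constructor
  · intro hx
    have hx0 : 0 < ‖X.1‖ := by linarith [min_le_left r2 (r^2)]
    set e := ‖X.1‖⁻¹ • X.1 with he
    have hen : ‖e‖ = 1 := by
      rw [he, norm_smul, norm_inv, norm_norm, inv_mul_cancel₀ hx0.ne']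
    have hin : inner ℝ e X.1 = ‖X.1‖ := by
      rw [he, real_inner_smul_left, real_inner_self_eq_norm_sq]; field_simp
    have h1 := claim e hen
    have hqb := q_bound hen hX
    have hqp := (q_pow hen hX hs0).1
    have hqp' := (q_pow hen hX (s := 1) one_pos).1
    rw [hin] at h1 hqb hqp hqp'
    have hq0 : 0 ≤ 2 - 2 * ‖X.1‖ := by nlinarith [hqb.1, sq_nonneg ‖X.1 - e‖, sq_nonneg X.2]
    have h2 := hmod2 (2 - 2 * ‖X.1‖) hq0 (by linarith [min_le_left r2 (r^2)])
    have hP : ((e, 0) : En n × ℝ) ∈ closedHalfBall n 1 := ⟨by simp [hen], le_refl _⟩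
    have hd : ‖X - (e, 0)‖ ≤ r := by
      rw [mul_one, Real.rpow_one, Real.rpow_two] at hqp'
      have : ‖X - (e, 0)‖ ^ 2 ≤ r ^ 2 := by linarith [min_le_right r2 (r^2)]
      exact (pow_le_pow_iff_left₀ (norm_nonneg _) hr.le two_ne_zero).1 this
    have h3 := abs_le.1 (hu.2.2 t ht X hX _ hP)
    have h4 := hmod _ (norm_nonneg _) hd
    linarith [h3.1]
  · have hen : ‖(EuclideanSpace.single (⟨0, hn⟩ : Fin n) (1:ℝ) : En n)‖ = 1 := by simp
    have h1 := claim _ hen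
    have hqb := q_bound hen hX
    set e : En n := EuclideanSpace.single (⟨0, hn⟩ : Fin n) (1:ℝ)
    have hP : ((e, 0) : En n × ℝ) ∈ closedHalfBall n 1 := ⟨by simp [hen], le_refl _⟩
    have hq0 : 0 ≤ 2 - 2 * inner ℝ e X.1 := by
      nlinarith [hqb.1, sq_nonneg ‖X.1 - e‖, sq_nonneg X.2]
    have hq4 : (2 - 2 * inner ℝ e X.1) ^ s ≤ 4 := by
      calc (2 - 2 * inner ℝ e X.1) ^ s ≤ 4 ^ s := Real.rpow_le_rpow hq0 hqb.2 hs0.le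
        _ ≤ 4 ^ (1:ℝ) := Real.rpow_le_rpow_of_exponent_le (by norm_num) (by linarith)
        _ = 4 := by simp
    have h5 := mul_le_mul_of_nonneg_left hq4 hK0.le
    have := (abs_le.1 (hu.2.1 t ht X hX)).1
    have := (abs_le.1 (hu.2.1 t ht _ hP)).2
    linarith

theorem slice_cont {n : ℕ} {u : ℝ → En n × ℝ → ℝ}
    (hu : ContinuousOn (fun q : ℝ × (En n × ℝ) => u q.1 q.2) (Icc (-1 : ℝ) 0 ×ˢ closedHalfBall n 1))
    {t : ℝ} (ht : t ∈ Icc (-1:ℝ) 0) : ContinuousOn (u t) (closedHalfBall n 1) := by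
  have hc : Continuous (fun p : En n × ℝ => (t, p)) := by fun_prop
  exact hu.comp hc.continuousOn (fun p hp => ⟨ht, hp⟩)

theorem near_sphere {n : ℕ} (hn : 1 ≤ n) {s α C₁ ε : ℝ} (hs : s ∈ Ioo (0 : ℝ) (1/2))
    (hα : 0 < α) (hC₁ : 0 ≤ C₁) (hε : 0 < ε) :
    ∃ ρ > 0, ρ ≤ 1/2 ∧ ∀ u v : ℝ → En n × ℝ → ℝ, HypU n α C₁ u →
      ContinuousOn (fun q : ℝ × (En n × ℝ) => u q.1 q.2) (Icc (-1 : ℝ) 0 ×ˢ closedHalfBall n 1) →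
      (∀ t ∈ Icc (-1 : ℝ) 0, IsAHarmonicOn (1 - 2*s) (u t) (halfBall n 1)) →
      IsFracHeatSolution (1 - 2*s) v → Agree n u v → ∀ t ∈ Icc (-1:ℝ) 0,
      ∀ X ∈ closedHalfBall n 1, (1 - ρ) ^ 2 ≤ ‖X.1‖ ^ 2 + X.2 ^ 2 → v t X ≤ u t X + ε := by
  have hs0 := hs.1
  have hs2 := hs.2
  obtain ⟨ρ, hρ, hρ1, A, hA, H⟩ := near_corner hn hs hα hC₁ (half_pos hε)
  set A' := A / ρ with hA'
  have hA'0 : 0 < A' := by positivity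
  refine ⟨min (1/2) (ε / (4 * A')), by positivity, min_le_left _ _, ?_⟩
  intro u v hu huc huh hv huv t ht X hX hXn
  have H := H u v hu hv huv t ht
  have main : ∀ X ∈ closedHalfBall n 1, v t X - u t X - A' * (1 - (‖X.1‖ ^ 2 + X.2 ^ 2)) ≤ ε / 2 := by
    set W : En n × ℝ → ℝ := fun X => v t X - u t X - A' * (1 - (‖X.1‖ ^ 2 + X.2 ^ 2)) with hW
    have hWc : ContinuousOn W (closedHalfBall n 1) :=
      ((slice_cont hv.1 ht).sub (slice_cont huc ht)).sub
        (by fun_prop : Continuous fun X : En n × ℝ => A' * (1 - (‖X.1‖ ^ 2 + X.2 ^ 2))).continuousOn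
    obtain ⟨X1, hX1, hmax⟩ := (isCompact_closedHalfBall n 1).exists_isMaxOn ⟨X, hX⟩ hWc
    suffices h : W X1 ≤ ε / 2 from fun Y hY => (hmax hY).trans h
    have hle : ‖X1.1‖ ^ 2 + X1.2 ^ 2 ≤ 1 := by simpa using hX1.1
    rcases hle.lt_or_eq with hlt | heq
    · rcases hX1.2.lt_or_eq with hy | hy
      · exfalso
        have hin : X1 ∈ halfBall n 1 := ⟨by simpa using hlt, hy⟩
        have hop := isOpen_halfBall n 1
        have hloc : IsLocalMax W X1 := by
          filter_upwards [hop.mem_nhds hin] with Y hY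
          exact hmax (flat_halfball hY)
        have j1 := fun w => jet_line hop (hv.2.1 t ht).1 hin w
        have j2 := fun w => jet_line hop (huh t ht).1 hin w
        have ji : ∀ i : Fin n, Jet (fun σ : ℝ => (fun X : En n × ℝ =>
            (1 - (‖X.1‖ ^ 2 + X.2 ^ 2))) (X1 + σ • (EuclideanSpace.single i (1:ℝ), (0:ℝ))))
            (-2 * X1.1 i) (2 * (-1)) := by
          intro i
          have := Jet.quad (1 - (‖X1.1‖ ^ 2 + X1.2 ^ 2)) (-2 * X1.1 i) (-1)
          convert this using 2 with σ
          simp only [Prod.fst_add, Prod.smul_fst, Prod.snd_add, Prod.smul_snd, norm_add_sq_real,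
            inner_smul_right, EuclideanSpace.inner_single_right, norm_smul]
          simp
          ring_nf
        have jy : Jet (fun σ : ℝ => (fun X : En n × ℝ =>
            (1 - (‖X.1‖ ^ 2 + X.2 ^ 2))) (X1 + σ • ((0 : En n), (1:ℝ))))
            (-2 * X1.2) (2 * (-1)) := by
          have := Jet.quad (1 - (‖X1.1‖ ^ 2 + X1.2 ^ 2)) (-2 * X1.2) (-1)
          convert this using 2 with σ
          simp
          ring_nf
        have := no_interior_max (a := 1 - 2*s) hloc
          (fun i => ((j1 _).sub (j2 _)).sub ((ji i).cmul A'))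
          (((j1 _).sub (j2 _)).sub (jy.cmul A'))
        have h1 := harm_sum (hv.2.1 t ht) hin
        have h2 := harm_sum (huh t ht) hin
        rw [Finset.sum_sub_distrib, Finset.sum_sub_distrib] at this
        have h3 : ∑ i : Fin n, A' * (2 * (-1)) ≤ 0 :=
          Finset.sum_nonpos fun i _ => by nlinarith
        have e1 : ∀ a b c : ℝ, c / X1.2 * (a - b - A' * (-2 * X1.2)) =
          c / X1.2 * a - c / X1.2 * b + 2 * A' * c := by
          intro a b c; field_simp; ring
        rw [e1] at this
        have : 0 < 2 * A' * (1 - 2*s) := mul_pos (by positivity) (by linarith)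
        generalize (∑ i : Fin n, A' * (2 * (-1))) = Sg at *
        linarith
      · rcases le_total (1 - ρ) ‖X1.1‖ with h | h
        · have := (H X1 hX1).1 h
          have : 0 ≤ A' * (1 - (‖X1.1‖ ^ 2 + X1.2 ^ 2)) := mul_nonneg hA'0.le (by linarith)
          simp only [hW]; linarith
        · have h1 := (H X1 hX1).2
          have h2 : ρ ≤ 1 - (‖X1.1‖ ^ 2 + X1.2 ^ 2) := by
            rw [← hy]; nlinarith [norm_nonneg X1.1]
          have h3 := mul_le_mul_of_nonneg_left h2 hA'0.le
          have h4 : A' * ρ = A := by rw [hA']; field_simp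
          simp only [hW]; linarith
    · have := huv.2 t ht X1 ⟨heq, hX1.2⟩
      simp only [hW, this, heq]; linarith
  have h1 := main X hX
  set ρ' := min (1/2) (ε / (4 * A'))
  have hρ'0 : 0 < ρ' := by positivity
  have h2 : 1 - (‖X.1‖ ^ 2 + X.2 ^ 2) ≤ 2 * ρ' := by nlinarith
  have h3 : A' * (2 * ρ') ≤ ε / 2 := by
    have : ρ' ≤ ε / (4 * A') := min_le_right _ _
    rw [le_div_iff₀ (by positivity)] at this
    linarith
  have h4 := mul_le_mul_of_nonneg_left h2 hA'0.le
  linarith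

theorem neg_harm {n : ℕ} {a : ℝ} {u : En n × ℝ → ℝ} {Ω} (hu : IsAHarmonicOn a u Ω) :
    IsAHarmonicOn a (fun p => -u p) Ω := by
  refine ⟨hu.1.neg, fun p hp => ?_⟩
  have h := hu.2 p hp
  simp only [lap, D2, fderiv_fun_neg, neg_apply, Finset.sum_neg_distrib] at h ⊢
  linarith

theorem neg_ndl {n : ℕ} {a : ℝ} {u : En n × ℝ → ℝ} {x : En n} {L : ℝ}
    (hu : NormalDerivLimit a u x L) : NormalDerivLimit a (fun p => -u p) x (-L) := by
  have := Tendsto.neg hu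
  unfold NormalDerivLimit
  simpa [fderiv_fun_neg] using this

theorem neg_heat {n : ℕ} {a : ℝ} {u : ℝ → En n × ℝ → ℝ} (hu : IsFracHeatSolution a u) :
    IsFracHeatSolution a (fun t p => -u t p) := by
  refine ⟨hu.1.neg, fun t ht => neg_harm (hu.2.1 t ht), fun t ht x hx => ?_⟩
  obtain ⟨h1, h2⟩ := hu.2.2 t ht x hx
  refine ⟨h1.neg, ?_⟩
  rw [derivWithin.fun_neg]
  exact neg_ndl h2

theorem neg_dd {n : ℕ} {a : ℝ} {b : ℝ → En n → En n} {f : ℝ → En n → ℝ} {u : ℝ → En n × ℝ → ℝ}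
    (hu : IsExtDDSolution a b f u) :
    IsExtDDSolution a b (fun t x => -f t x) (fun t p => -u t p) := by
  refine ⟨hu.1.neg, fun t ht => neg_harm (hu.2.1 t ht), fun q hq => (hu.2.2.1 q hq).neg,
    fun t x hx => ?_⟩
  obtain ⟨L, h1, h2⟩ := hu.2.2.2 t x hx
  refine ⟨-L, neg_ndl h1, ?_⟩
  have h3 : fderivWithin ℝ (bdryFun fun t p => -u t p) (Ioc (-1 : ℝ) 0 ×ˢ flatBall n 1) (t, x) =
     - fderivWithin ℝ (bdryFun u) (Ioc (-1 : ℝ) 0 ×ˢ flatBall n 1) (t, x) := by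
    have hud : UniqueDiffWithinAt ℝ (Ioc (-1 : ℝ) 0 ×ˢ flatBall n 1) (t, x) := by
      apply UniqueDiffWithinAt.prod
      · exact uniqueDiffOn_Ioc _ _ t hx.1
      · have : IsOpen (flatBall n 1) := isOpen_lt continuous_norm continuous_const
        exact this.uniqueDiffWithinAt hx.2
    exact fderivWithin_fun_neg hud
  rw [h3]
  simp only [neg_apply]
  linarith

theorem neg_hyp {n : ℕ} {α C₁ : ℝ} {u : ℝ → En n × ℝ → ℝ} (hu : HypU n α C₁ u) :
    HypU n α C₁ (fun t p => -u t p) := by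
  refine ⟨fun t ht t' ht' x hx x' hx' => ?_, fun t ht p hp => ?_, fun t ht p hp q hq => ?_⟩
  · have := hu.1 t ht t' ht' x hx x' hx'
    rwa [neg_sub_neg, abs_sub_comm]
  · simpa using hu.2.1 t ht p hp
  · have := hu.2.2 t ht p hp q hq
    rwa [neg_sub_neg, abs_sub_comm]

theorem neg_agree {n : ℕ} {u v : ℝ → En n × ℝ → ℝ} (h : Agree n u v) :
    Agree n (fun t p => -u t p) (fun t p => -v t p) :=
  ⟨fun p hp => by simp only [h.1 p hp], fun t ht p hp => by simp only [h.2 t ht p hp]⟩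

theorem shift_mem {n : ℕ} {ρ : ℝ} (hρ0 : 0 ≤ ρ) (hρ : ρ ≤ 1) {X : En n × ℝ} {z : En n}
    (hX : ‖X.1‖ ^ 2 + X.2 ^ 2 ≤ (1 - ρ) ^ 2) (hy : 0 ≤ X.2) (hz : ‖z‖ ≤ ρ) :
    X + (z, 0) ∈ closedHalfBall n 1 := by
  have h1 : ‖X.1 + z‖ ≤ ‖X.1‖ + ρ := (norm_add_le _ _).trans (by linarith)
  have h2 : ‖X.1‖ ≤ 1 - ρ :=
    (pow_le_pow_iff_left₀ (norm_nonneg _) (by linarith) two_ne_zero).1 (by nlinarith [sq_nonneg X.2])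
  have h3 : ‖X.1 + z‖ ^ 2 ≤ (‖X.1‖ + ρ) ^ 2 := pow_le_pow_left₀ (norm_nonneg _) h1 2
  refine ⟨?_, by simpa using hy⟩
  simp only [Prod.fst_add, Prod.snd_add, add_zero]
  nlinarith

theorem shift_mem' {n : ℕ} {ρ : ℝ} (hρ0 : 0 ≤ ρ) (hρ : ρ ≤ 1) {X : En n × ℝ} {z : En n}
    (hX : ‖X.1‖ ^ 2 + X.2 ^ 2 < (1 - ρ) ^ 2) (hz : ‖z‖ ≤ ρ) :
    ‖X.1 + z‖ ^ 2 + X.2 ^ 2 < 1 := by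
  have h1 : ‖X.1 + z‖ ≤ ‖X.1‖ + ρ := (norm_add_le _ _).trans (by linarith)
  have h2 : ‖X.1‖ ≤ 1 - ρ :=
    (pow_le_pow_iff_left₀ (norm_nonneg _) (by linarith) two_ne_zero).1 (by nlinarith [sq_nonneg X.2])
  have h3 : ‖X.1 + z‖ ^ 2 ≤ (‖X.1‖ + ρ) ^ 2 := pow_le_pow_left₀ (norm_nonneg _) h1 2
  nlinarith

set_option maxHeartbeats 2000000 in
theorem one_side {n : ℕ} (hn : 1 ≤ n) {s α C₁ ε : ℝ} (hs : s ∈ Ioo (0 : ℝ) (1/2))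
    (hα : 0 < α) (hC₁ : 0 ≤ C₁) (hε : 0 < ε) :
    ∃ δ > 0, ∀ (b : ℝ → En n → En n) (f : ℝ → En n → ℝ) (u v : ℝ → En n × ℝ → ℝ),
      IsExtDDSolution (1 - 2*s) b f u → HypU n α C₁ u →
      (∀ t ∈ Icc (-1 : ℝ) 0, ∀ x ∈ flatBall n 1, ‖b t x‖ < δ) →
      (∀ t ∈ Icc (-1 : ℝ) 0, ∀ x ∈ flatBall n 1, |f t x| < δ) →
      IsFracHeatSolution (1 - 2*s) v → Agree n u v →
      ∀ t ∈ Icc (-1 : ℝ) 0, ∀ p ∈ halfBall n 1, u t p - v t p ≤ ε := by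
  have hs0 := hs.1
  have hs2 := hs.2
  obtain ⟨ρ1, hρ1, hρ1h, Hn⟩ := near_sphere hn hs hα hC₁ (half_pos hε)
  obtain ⟨r, hr, hr1, hmod⟩ := modulus (C := C₁) hα (show 0 < ε / 8 by positivity)
  set ρ := min ρ1 r with hρdef
  have hρ : 0 < ρ := lt_min hρ1 hr
  have hρh : ρ ≤ 1/2 := (min_le_left _ _).trans hρ1h
  have hρr : ρ ≤ r := min_le_right _ _
  have hρsq : (1 - ρ) ^ 2 ≤ 1 := by nlinarith
  set H := ε / (2 * ρ ^ 2) with hH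
  have hH0 : 0 < H := by positivity
  refine ⟨ε / 8 / (1 + 2 * H * ρ), by positivity, ?_⟩
  set δ := ε / 8 / (1 + 2 * H * ρ) with hδ
  have hδ0 : 0 < δ := by positivity
  have hδe : δ * (1 + 2 * H * ρ) = ε / 8 := by rw [hδ]; field_simp
  intro b f u v hu hU hb hf hv huv
  obtain ⟨hu1, hu2, hu3, hu4⟩ := hu
  have near : ∀ t ∈ Icc (-1:ℝ) 0, ∀ X ∈ closedHalfBall n 1,
      (1 - ρ) ^ 2 ≤ ‖X.1‖ ^ 2 + X.2 ^ 2 → u t X - v t X ≤ ε / 2 := by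
    intro t ht X hX h
    have := Hn (fun t p => -u t p) (fun t p => -v t p) (neg_hyp hU) hu1.neg
      (fun t ht => neg_harm (hu2 t ht)) (neg_heat hv) (neg_agree huv) t ht X hX
      (le_trans (by nlinarith [min_le_left ρ1 r]) h)
    linarith
  intro t ht p hp
  by_contra hlt
  push Not at hlt
  have hpc := flat_halfball hp
  have hpin : ‖p.1‖ ^ 2 + p.2 ^ 2 < (1 - ρ) ^ 2 := by
    by_contra h
    push Not at h
    have := near t ht p hpc h
    linarith
  obtain ⟨hv1, hv2, hv3⟩ := hv
  have sub1 : closedHalfBall n (1 - ρ) ⊆ closedHalfBall n 1 := fun X hX =>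
    ⟨hX.1.trans (by rw [one_pow]; exact hρsq), hX.2⟩
  have smem : ∀ X ∈ closedHalfBall n (1 - ρ), ∀ z ∈ Metric.closedBall (0 : En n) ρ,
      X + (z, 0) ∈ closedHalfBall n 1 := fun X hX z hz =>
    shift_mem hρ.le (by linarith) hX.1 hX.2 (by simpa using hz)
  have hosc : ∀ t ∈ Icc (-1:ℝ) 0, ∀ X ∈ closedHalfBall n (1 - ρ),
      ∀ z ∈ Metric.closedBall (0 : En n) ρ, u t (X + (z, 0)) - u t X ≤ ε / 8 := by
    intro t ht X hX z hz
    have h1 := (abs_le.1 (hU.2.2 t ht _ (smem X hX z hz) X (sub1 hX))).2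
    have h2 : ‖X + (z, 0) - X‖ ≤ r := by
      have : ‖z‖ ≤ ρ := by simpa using hz
      rw [add_sub_cancel_left, Prod.norm_def]
      simp only [norm_zero]
      exact max_le (this.trans hρr) hr.le
    exact h1.trans (hmod _ (norm_nonneg _) h2)
  set Φ : ℝ × (En n × ℝ) × En n → ℝ := fun q =>
    u q.1 (q.2.1 + (q.2.2, 0)) - v q.1 q.2.1 - H * ‖q.2.2‖ ^ 2 + ε / 8 * q.2.1.2 ^ 2
      - ε / 8 * (q.1 + 1) with hΦ
  have hcomp : IsCompact (Icc (-1:ℝ) 0 ×ˢ (closedHalfBall n (1 - ρ) ×ˢ Metric.closedBall (0 : En n) ρ)) :=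
    isCompact_Icc.prod ((isCompact_closedHalfBall n _).prod (isCompact_closedBall _ _))
  have hΦc : ContinuousOn Φ
      (Icc (-1:ℝ) 0 ×ˢ (closedHalfBall n (1 - ρ) ×ˢ Metric.closedBall (0 : En n) ρ)) := by
    have c1 : ContinuousOn (fun q : ℝ × (En n × ℝ) × En n => u q.1 (q.2.1 + (q.2.2, 0)))
        (Icc (-1:ℝ) 0 ×ˢ (closedHalfBall n (1 - ρ) ×ˢ Metric.closedBall (0 : En n) ρ)) := by
      have hc : Continuous (fun q : ℝ × (En n × ℝ) × En n =>
        ((q.1, q.2.1 + (q.2.2, (0:ℝ))) : ℝ × (En n × ℝ))) := by fun_prop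
      exact hu1.comp hc.continuousOn (fun q hq => ⟨hq.1, smem _ hq.2.1 _ hq.2.2⟩)
    have c2 : ContinuousOn (fun q : ℝ × (En n × ℝ) × En n => v q.1 q.2.1)
        (Icc (-1:ℝ) 0 ×ˢ (closedHalfBall n (1 - ρ) ×ˢ Metric.closedBall (0 : En n) ρ)) := by
      have hc : Continuous (fun q : ℝ × (En n × ℝ) × En n =>
        ((q.1, q.2.1) : ℝ × (En n × ℝ))) := by fun_prop
      exact hv1.comp hc.continuousOn (fun q hq => ⟨hq.1, sub1 hq.2.1⟩)
    exact (((c1.sub c2).sub (by fun_prop)).add (by fun_prop)).sub (by fun_prop)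
  have hp' : p ∈ closedHalfBall n (1 - ρ) := ⟨hpin.le, hp.2.le⟩
  have h0mem : (0 : En n) ∈ Metric.closedBall (0 : En n) ρ := by simp [hρ.le]
  obtain ⟨⟨t1, X1, z1⟩, ⟨ht1, hX1, hz1⟩, hmax⟩ := hcomp.exists_isMaxOn
    ⟨(t, p, 0), ht, hp', h0mem⟩ hΦc
  simp only at ht1 hX1 hz1
  have hmax' : ∀ t' ∈ Icc (-1:ℝ) 0, ∀ Y ∈ closedHalfBall n (1 - ρ),
      ∀ z ∈ Metric.closedBall (0 : En n) ρ,
      u t' (Y + (z, 0)) - v t' Y - H * ‖z‖ ^ 2 + ε / 8 * Y.2 ^ 2 - ε / 8 * (t' + 1) ≤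
      u t1 (X1 + (z1, 0)) - v t1 X1 - H * ‖z1‖ ^ 2 + ε / 8 * X1.2 ^ 2 - ε / 8 * (t1 + 1) :=
    fun t' h Y h' z hz => hmax (show (t', Y, z) ∈ _ from ⟨h, h', hz⟩)
  clear_value Φ
  have hbig : ε - ε / 8 < u t1 (X1 + (z1, 0)) - v t1 X1 - H * ‖z1‖ ^ 2 + ε / 8 * X1.2 ^ 2
      - ε / 8 * (t1 + 1) := by
    have h1 := hmax' t ht p hp' 0 h0mem
    have h2 : p + ((0 : En n), (0:ℝ)) = p := by ext1 <;> simp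
    rw [h2] at h1
    have h3 : ε / 8 * (t + 1) ≤ ε / 8 := by nlinarith [ht.2]
    have h4 : 0 ≤ ε / 8 * p.2 ^ 2 := by positivity
    simp only [norm_zero] at h1
    linarith
  have hy1 : ε / 8 * X1.2 ^ 2 ≤ ε / 8 := by
    have : X1.2 ^ 2 ≤ 1 := by have := (sub1 hX1).1; nlinarith [sq_nonneg ‖X1.1‖]
    nlinarith
  have ht1p : 0 ≤ ε / 8 * (t1 + 1) := mul_nonneg (by positivity) (by linarith [ht1.1])
  have hHz : 0 ≤ H * ‖z1‖ ^ 2 := by positivity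
  have hbig2 : ε / 2 < u t1 X1 - v t1 X1 := by
    have := hosc t1 ht1 X1 hX1 z1 hz1
    linarith
  have ht1lt : -1 < t1 := by
    rcases ht1.1.lt_or_eq with h | h
    · exact h
    · have := huv.1 X1 (sub1 hX1)
      rw [← h] at hbig2
      linarith
  have hX1lt : ‖X1.1‖ ^ 2 + X1.2 ^ 2 < (1 - ρ) ^ 2 := by
    by_contra h
    push Not at h
    have := near t1 ht1 X1 (sub1 hX1) h
    linarith
  have hz1lt : ‖z1‖ < ρ := by
    have h1 := hmax' t1 ht1 X1 hX1 0 h0mem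
    have h2 : X1 + ((0 : En n), (0:ℝ)) = X1 := by ext1 <;> simp
    rw [h2] at h1
    simp only [norm_zero] at h1
    have h3 := hosc t1 ht1 X1 hX1 z1 hz1
    have h4 : H * ‖z1‖ ^ 2 ≤ ε / 8 := by linarith
    have h5 : H * ρ ^ 2 = ε / 2 := by rw [hH]; field_simp
    have h6 : H * ‖z1‖ ^ 2 < H * ρ ^ 2 := by linarith
    have h7 := lt_of_mul_lt_mul_left h6 hH0.le
    exact lt_of_pow_lt_pow_left₀ 2 hρ.le h7
  have hshift := shift_mem' hρ.le (by linarith) hX1lt hz1lt.le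
  rcases hX1.2.lt_or_eq with hy | hy
  · -- interior
    have hin : X1 ∈ halfBall n 1 := ⟨by rw [one_pow]; exact hX1lt.trans_le hρsq, hy⟩
    have hinρ : X1 ∈ halfBall n (1 - ρ) := ⟨hX1lt, hy⟩
    have hin2 : X1 + (z1, 0) ∈ halfBall n 1 := ⟨by simpa using hshift, by simpa using hy⟩
    have hop := isOpen_halfBall n 1
    have hloc : IsLocalMax (fun Y => u t1 (Y + (z1, 0)) - v t1 Y + ε / 8 * Y.2 ^ 2) X1 := by
      filter_upwards [(isOpen_halfBall n (1 - ρ)).mem_nhds hinρ] with Y hY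
      have := hmax' t1 ht1 Y ⟨hY.1.le, hY.2.le⟩ z1 hz1
      linarith
    have j1 : ∀ w : En n × ℝ, Jet (fun σ : ℝ => u t1 (X1 + σ • w + (z1, 0)))
        (fderiv ℝ (u t1) (X1 + (z1, 0)) w) (D2 (u t1) (X1 + (z1, 0)) w) := by
      intro w
      have := jet_line hop (hu2 t1 ht1).1 hin2 w
      simpa only [add_right_comm] using this
    have j2 := fun w => jet_line hop (hv2 t1 ht1).1 hin w
    have ji : ∀ i : Fin n, Jet (fun σ : ℝ => ((X1 + σ • ((EuclideanSpace.single i (1:ℝ) : En n), (0:ℝ))).2) ^ 2)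
        0 0 := by
      intro i
      have := Jet.const (X1.2 ^ 2)
      convert this using 2 with σ
      simp
    have jy : Jet (fun σ : ℝ => ((X1 + σ • ((0 : En n), (1:ℝ))).2) ^ 2) (2 * X1.2) (2 * 1) := by
      have := Jet.quad (X1.2 ^ 2) (2 * X1.2) 1
      convert this using 2 with σ
      simp
      ring
    have := no_interior_max (a := 1 - 2*s) hloc
      (fun i => ((j1 _).sub (j2 _)).add ((ji i).cmul (ε / 8)))
      (((j1 _).sub (j2 _)).add (jy.cmul (ε / 8)))
    have h1 := harm_sum (hv2 t1 ht1) hin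
    have h2 := harm_sum (hu2 t1 ht1) hin2
    simp only [mul_zero, add_zero, Finset.sum_sub_distrib] at this
    rw [show (X1 + (z1, (0:ℝ))).2 = X1.2 by simp] at h2
    have e1 : ∀ a b c : ℝ, c / X1.2 * (a - b + ε / 8 * (2 * X1.2)) =
      c / X1.2 * a - c / X1.2 * b + ε / 4 * c := by
      intro a b c; field_simp; ring
    rw [e1] at this
    have : 0 < ε / 4 * (1 - 2*s) := mul_pos (by positivity) (by linarith)
    linarith
  · -- base
    obtain ⟨x1, y1⟩ := X1
    simp only at hy hX1lt hshift
    subst hy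
    have hshift1 : ‖x1 + z1‖ ^ 2 < 1 := by simpa using hshift
    have hx1 : ‖x1‖ ^ 2 < (1 - ρ) ^ 2 := by simpa using hX1lt
    have hx1' : ‖x1‖ ^ 2 < 1 := hx1.trans_le hρsq
    have flat_of : ∀ x : En n, ‖x‖ ^ 2 < 1 → x ∈ flatBall n 1 := fun x hx => by
      have : ‖x‖ < 1 := by simpa using hx
      exact this
    have hxf := flat_of x1 hx1'
    have hxzf := flat_of _ hshift1
    have htio : t1 ∈ Ioc (-1:ℝ) 0 := ⟨ht1lt, ht1.2⟩
    obtain ⟨hdt, hLv⟩ := hv3 t1 htio x1 hxf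
    obtain ⟨L, hLu, heq⟩ := hu4 t1 (x1 + z1) ⟨htio, hxzf⟩
    have hdu := hu3 (t1, x1 + z1) ⟨htio, hxzf⟩
    have hbb := hb t1 ht1 (x1 + z1) hxzf
    have hff := hf t1 ht1 (x1 + z1) hxzf
    set β := b t1 (x1 + z1) with hβ
    set D := derivWithin (fun τ => v τ (x1, 0)) (Ioc (-1 : ℝ) 0) t1
    set F := fderivWithin ℝ (bdryFun u) (Ioc (-1 : ℝ) 0 ×ˢ flatBall n 1) (t1, x1 + z1) with hF
    have hopf : IsOpen (flatBall n 1) := isOpen_lt continuous_norm continuous_const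
    -- path
    obtain ⟨κ, hκ, hκt, hκz, hκf⟩ : ∃ κ > 0, κ ≤ (t1 + 1) / 2 ∧
        (∀ σ ∈ Icc 0 κ, ‖z1 - σ • β‖ < ρ) ∧ (∀ σ ∈ Icc 0 κ, x1 + z1 - σ • β ∈ flatBall n 1) := by
      have e1 : ∀ᶠ σ in 𝓝 (0:ℝ), ‖z1 - σ • β‖ < ρ := by
        have hc : ContinuousAt (fun σ : ℝ => ‖z1 - σ • β‖) 0 := by fun_prop
        exact hc.eventually (gt_mem_nhds (by simpa using hz1lt))
      have e2 : ∀ᶠ σ in 𝓝 (0:ℝ), x1 + z1 - σ • β ∈ flatBall n 1 := by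
        have hc : ContinuousAt (fun σ : ℝ => x1 + z1 - σ • β) 0 := by fun_prop
        exact hc.eventually (hopf.mem_nhds (by simpa using hxzf))
      obtain ⟨κ, hκ, h⟩ := Metric.eventually_nhds_iff.1 (e1.and e2)
      have hmm : 0 < (t1 + 1) / 2 := by linarith
      refine ⟨min (κ/2) ((t1+1)/2), by positivity, min_le_right _ _, ?_, ?_⟩ <;>
      · intro σ hσ
        have : dist σ 0 < κ := by
          rw [Real.dist_eq, sub_zero, abs_of_nonneg hσ.1]
          linarith [hσ.2.trans (min_le_left _ _)]
        first | exact (h this).1 | exact (h this).2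
    have hT : -(F (1, 0) + F (0, β)) + D + 2 * H * inner ℝ z1 β + ε / 8 ≤ 0 := by
      have d1 : HasDerivWithinAt (fun σ => bdryFun u (t1 - σ, x1 + z1 - σ • β))
          (F (-1, -β)) (Icc 0 κ) 0 := by
        have hγ : HasDerivWithinAt (fun σ : ℝ => (t1 - σ, x1 + z1 - σ • β)) (-1, -β) (Icc 0 κ) 0 := by
          have g1 : HasDerivAt (fun σ : ℝ => t1 - σ) (-1) 0 := (hasDerivAt_id (0:ℝ)).const_sub t1
          have g2 : HasDerivAt (fun σ : ℝ => x1 + z1 - σ • β) (-β) 0 := by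
            simpa using ((hasDerivAt_id (0:ℝ)).smul_const β).const_sub (x1 + z1)
          exact (g1.prodMk g2).hasDerivWithinAt
        have hfd : HasFDerivWithinAt (bdryFun u) F (Ioc (-1 : ℝ) 0 ×ˢ flatBall n 1)
            ((fun σ : ℝ => (t1 - σ, x1 + z1 - σ • β)) 0) := by
          simpa using hdu.hasFDerivWithinAt
        refine hfd.comp_hasDerivWithinAt 0 hγ ?_
        intro σ hσ
        refine ⟨⟨?_, ?_⟩, hκf σ hσ⟩
        · simp only; linarith [hσ.2]
        · simp only; linarith [hσ.1, ht1.2]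
      have d2 := (time_deriv htio hdt).mono (Icc_subset_Icc_right hκt)
      have d3 : HasDerivWithinAt (fun σ : ℝ => H * ‖z1 - σ • β‖ ^ 2) (H * (-2 * inner ℝ z1 β))
          (Icc 0 κ) 0 := by
        have hh : (fun σ : ℝ => H * ‖z1 - σ • β‖ ^ 2) = fun σ =>
            H * (‖z1‖ ^ 2 + (-2 * inner ℝ z1 β) * σ + ‖β‖ ^ 2 * σ ^ 2) := by
          funext σ
          rw [norm_sub_sq_real, inner_smul_right, norm_smul, mul_pow, Real.norm_eq_abs, sq_abs]; ring
        rw [hh]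
        obtain ⟨g1, a1, a2, a3⟩ := (Jet.quad (‖z1‖^2) (-2 * inner ℝ z1 β) (‖β‖^2)).cmul H
        rw [← a2]
        exact a1.self_of_nhds.hasDerivWithinAt
      have d4 : HasDerivWithinAt (fun σ : ℝ => ε / 8 * σ) (ε / 8) (Icc 0 κ) 0 := by
        simpa using ((hasDerivAt_id (0:ℝ)).const_mul (ε/8)).hasDerivWithinAt
      have d := ((d1.sub d2).sub d3).add d4
      have hval : F (-1, -β) = -(F (1, 0) + F (0, β)) := by
        rw [← map_add, ← map_neg]; simp
      rw [hval] at d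
      have := one_sided hκ d ?_
      · linarith
      · intro σ hσ
        have h2 := hmax' (t1 - σ) ⟨by linarith [hσ.2], by linarith [hσ.1, ht1.2]⟩ (x1, 0) hX1
          (z1 - σ • β) (by simpa using (hκz σ hσ).le)
        simp only [Prod.mk_add_mk, add_zero] at h2
        simp only [Pi.sub_apply, Pi.add_apply, bdryFun, sub_zero, zero_smul, mul_zero, add_zero]
        rw [add_sub_assoc x1]
        linarith
    -- space
    obtain ⟨k1, hk1, hk1'⟩ := exists_kappa hx1
    obtain ⟨k2, hk2, hk2'⟩ := exists_kappa hshift1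
    set k := min k1 k2 with hk
    have hk0 : 0 < k := lt_min hk1 hk2
    have hk1k : k ^ 2 ≤ k1 ^ 2 := pow_le_pow_left₀ hk0.le (min_le_left _ _) 2
    have hk2k : k ^ 2 ≤ k2 ^ 2 := pow_le_pow_left₀ hk0.le (min_le_right _ _) 2
    have hS : L - D + 0 ≤ 0 := by
      refine base_max (g := fun y => u t1 (x1 + z1, y) - v t1 (x1, y) + ε / 8 * y ^ 2)
        (g' := fun y => fderiv ℝ (u t1) (x1 + z1, y) (0,1) - fderiv ℝ (v t1) (x1, y) (0,1)
          + ε / 8 * (2 * y)) (a := 1 - 2*s) hk0 ?_ ?_ ?_ ?_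
      · exact ((y_cont hu1 ht1 (by linarith)).sub (y_cont hv1 ht1 (by linarith))).add
          (by fun_prop)
      · intro y hy
        have hyk : y ^ 2 ≤ k ^ 2 := pow_le_pow_left₀ hy.1.le hy.2.le 2
        refine ((y_deriv (hu2 t1 ht1) ⟨?_, hy.1⟩).sub (y_deriv (hv2 t1 ht1) ⟨?_, hy.1⟩)).add ?_
        · simp only; linarith
        · simp only; linarith
        · simpa using (hasDerivAt_pow 2 y).const_mul (ε/8)
      · have hz : Tendsto (fun y : ℝ => y ^ (1 - 2*s) * (ε / 8 * (2 * y))) (𝓝[>] 0) (𝓝 0) := by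
          have hc : ContinuousAt (fun y : ℝ => y ^ (1 - 2*s) * (ε / 8 * (2 * y))) 0 := by
            apply ContinuousAt.mul
            · exact Real.continuousAt_rpow_const _ _ (Or.inr (by linarith))
            · fun_prop
          have := hc.tendsto
          simp only [mul_zero] at this
          exact this.mono_left nhdsWithin_le_nhds
        refine ((hLu.sub hLv).add hz).congr (fun y => ?_)
        ring
      · intro y hy
        have hyk : y ^ 2 ≤ k ^ 2 := pow_le_pow_left₀ hy.1 hy.2 2
        have h2 := hmax' t1 ht1 (x1, y) ⟨by simp only; linarith, hy.1⟩ z1 hz1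
        simp only [Prod.mk_add_mk, add_zero] at h2
        linarith
    have hip : |inner ℝ z1 β| ≤ ρ * δ :=
      (abs_real_inner_le_norm z1 β).trans
        (mul_le_mul hz1lt.le hbb.le (norm_nonneg _) hρ.le)
    have h9 := (abs_le.1 hip).1
    have h10 := (abs_lt.1 hff).2
    have h11 : 2 * H * (-(ρ * δ)) ≤ 2 * H * inner ℝ z1 β :=
      mul_le_mul_of_nonneg_left h9 (by positivity)
    have h12 : δ + 2 * H * (ρ * δ) = ε / 8 := by rw [← hδe]; ring
    linarith

/-- **The approximation lemma** (Lemma 7.1): if `‖u‖_∞ ≤ 1`, `u` is `C^α` in the stated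
sense, and `b`, `f` are small in `L^∞`, then `u` is uniformly close to the solution of the
drift-less problem with the same boundary data. -/
theorem approximation_lemma (n : ℕ) (hn : 1 ≤ n) (s : ℝ) (hs : s ∈ Ioo (0 : ℝ) (1/2))
    (α : ℝ) (hα : α ∈ Ioc (0 : ℝ) 1) (C₁ : ℝ) (hC₁ : 0 ≤ C₁) (ε : ℝ) (hε : 0 < ε) :
    ∃ δ > 0, ∀ (b : ℝ → En n → En n) (f : ℝ → En n → ℝ) (u v : ℝ → En n × ℝ → ℝ),
      IsExtDDSolution (1 - 2*s) b f u →
      (∀ t ∈ Icc (-1 : ℝ) 0, ∀ p ∈ halfBall n 1, |u t p| ≤ 1) →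
      (∀ t ∈ Icc (-1 : ℝ) 0, ∀ x ∈ flatBall n 1, |u t (x, 0)| ≤ C₁) →
      (∀ t ∈ Icc (-1 : ℝ) 0, ∀ t' ∈ Icc (-1 : ℝ) 0,
        ∀ x ∈ flatBall n 1, ∀ x' ∈ flatBall n 1,
          |u t (x, 0) - u t' (x', 0)| ≤ C₁ * (|t - t'| + ‖x - x'‖) ^ α) →
      (∀ t ∈ Icc (-1 : ℝ) 0, ∀ p ∈ closedHalfBall n 1, |u t p| ≤ C₁) →
      (∀ t ∈ Icc (-1 : ℝ) 0, ∀ p ∈ closedHalfBall n 1, ∀ q ∈ closedHalfBall n 1,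
          |u t p - u t q| ≤ C₁ * ‖p - q‖ ^ α) →
      (∀ t ∈ Icc (-1 : ℝ) 0, ∀ x ∈ flatBall n 1, ‖b t x‖ < δ) →
      (∀ t ∈ Icc (-1 : ℝ) 0, ∀ x ∈ flatBall n 1, |f t x| < δ) →
      IsFracHeatSolution (1 - 2*s) v →
      (∀ p ∈ closedHalfBall n 1, v (-1) p = u (-1) p) →
      (∀ t ∈ Icc (-1 : ℝ) 0, ∀ p ∈ closedSpherePlus n, v t p = u t p) →
      ∀ t ∈ Icc (-1 : ℝ) 0, ∀ p ∈ halfBall n 1, |u t p - v t p| ≤ ε := by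
  obtain ⟨δ, hδ, H⟩ := one_side hn hs hα.1 hC₁ hε
  refine ⟨δ, hδ, ?_⟩
  intro b f u v hu _ _ h1 h2 h3 hb hf hv ha1 ha2 t ht p hp
  have hU : HypU n α C₁ u := ⟨h1, h2, h3⟩
  have hA : Agree n u v := ⟨ha1, ha2⟩
  have k1 := H b f u v hu hU hb hf hv hA t ht p hp
  have k2 := H b _ _ _ (neg_dd hu) (neg_hyp hU) hb
    (fun t ht x hx => by simpa using hf t ht x hx) (neg_heat hv) (neg_agree hA) t ht p hp
  rw [abs_le]
  constructor <;> linarith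

end
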